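/- The map (γ, υ) ↦ [[γ, 0],[υ, J̆ ᵗγ^{−1} J̆]] restricts to a bijection from T_00 onto U^{opp}_{GSp_{2g},1}, the set of lower triangular matrices in GSp_{2g}(ℤ_p) with all diagonal entries equal to 1 that are congruent to the identity mod p. -/

import Mathlib

open Matrix

/-- The `g × g` anti-diagonal matrix `J̆`: the `(i, j)` entry is `1` exactly when
`j = g + 1 - i` in one-based numbering, i.e. `i + j + 1 = g` in zero-based numbering. -/
def Jb (g : ℕ) (R : Type*) [CommRing R] : Matrix (Fin g) (Fin g) R :=
  Matrix.of fun i j => if (i : ℕ) + (j : ℕ) + 1 = g then 1 else 0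

/-- The standard symplectic matrix `J = [[0, -J̆], [J̆, 0]]` of size `2g`. -/
def Jmat (g : ℕ) (R : Type*) [CommRing R] :
    Matrix (Fin g ⊕ Fin g) (Fin g ⊕ Fin g) R :=
  Matrix.fromBlocks 0 (-(Jb g R)) (Jb g R) 0

/-- Membership in the symplectic similitude group `GSp_{2g}(R)`:
`ᵗγ J γ = ς · J` for some unit `ς` (the similitude factor). -/
def IsGSp {g : ℕ} {R : Type*} [CommRing R]
    (M : Matrix (Fin g ⊕ Fin g) (Fin g ⊕ Fin g) R) : Prop :=
  IsUnit M.det ∧ ∃ s : Rˣ, Mᵀ * Jmat g R * M = (s : R) • Jmat g R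

/-- The Iwahori subgroup `Iw_{GL_g}` of `GL_g(ℤ_p)`: invertible matrices over `ℤ_p`
whose reduction mod `p` is upper triangular. -/
def IwGL (p g : ℕ) [Fact p.Prime] : Set (Matrix (Fin g) (Fin g) ℤ_[p]) :=
  {M | IsUnit M.det ∧ ∀ i j : Fin g, j < i → (p : ℤ_[p]) ∣ M i j}

/-- The strict Iwahori subgroup `Iw⁺_{GL_g}` of `GL_g(ℤ_p)`: reduction mod `p` is diagonal. -/
def IwGLplus (p g : ℕ) [Fact p.Prime] : Set (Matrix (Fin g) (Fin g) ℤ_[p]) :=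
  {M | IsUnit M.det ∧ ∀ i j : Fin g, i ≠ j → (p : ℤ_[p]) ∣ M i j}

/-- `T_{GL_g,0}`: diagonal matrices in `GL_g(ℤ_p)`. -/
def TGL (p g : ℕ) [Fact p.Prime] : Set (Matrix (Fin g) (Fin g) ℤ_[p]) :=
  {M | IsUnit M.det ∧ ∀ i j : Fin g, i ≠ j → M i j = 0}

/-- `U_{GL_g,0}`: upper triangular unipotent matrices in `GL_g(ℤ_p)`. -/
def UGL0 (p g : ℕ) [Fact p.Prime] : Set (Matrix (Fin g) (Fin g) ℤ_[p]) :=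
  {M | (∀ i j : Fin g, j < i → M i j = 0) ∧ ∀ i : Fin g, M i i = 1}

/-- `U_{GL_g,1}`: upper triangular unipotent matrices congruent to `1` mod `p`. -/
def UGL1 (p g : ℕ) [Fact p.Prime] : Set (Matrix (Fin g) (Fin g) ℤ_[p]) :=
  {M | M ∈ UGL0 p g ∧ ∀ i j : Fin g, i < j → (p : ℤ_[p]) ∣ M i j}

/-- `U^{opp}_{GL_g,1}`: lower triangular unipotent matrices in `GL_g(ℤ_p)`
congruent to `1` mod `p`. -/
def UGLopp1 (p g : ℕ) [Fact p.Prime] : Set (Matrix (Fin g) (Fin g) ℤ_[p]) :=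
  {M | (∀ i j : Fin g, i < j → M i j = 0) ∧ (∀ i : Fin g, M i i = 1) ∧
    ∀ i j : Fin g, j < i → (p : ℤ_[p]) ∣ M i j}

/-- `B_{GL_g,0}`: upper triangular matrices in `GL_g(ℤ_p)`. -/
def BGL0 (p g : ℕ) [Fact p.Prime] : Set (Matrix (Fin g) (Fin g) ℤ_[p]) :=
  {M | IsUnit M.det ∧ ∀ i j : Fin g, j < i → M i j = 0}

/-- The linear position of an index of a `2g × 2g` matrix indexed by `Fin g ⊕ Fin g`. -/
def idx {g : ℕ} : Fin g ⊕ Fin g → ℕ :=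
  Sum.elim (fun i => (i : ℕ)) fun i => g + (i : ℕ)

/-- `U^{opp}_{GSp_{2g},1}`: lower triangular matrices in `GSp_{2g}(ℤ_p)` with all
diagonal entries equal to `1` that are congruent to the identity mod `p`. -/
def UGSpOpp1 (p g : ℕ) [Fact p.Prime] :
    Set (Matrix (Fin g ⊕ Fin g) (Fin g ⊕ Fin g) ℤ_[p]) :=
  {M | IsGSp M ∧ (∀ a b : Fin g ⊕ Fin g, idx a < idx b → M a b = 0) ∧
    (∀ a : Fin g ⊕ Fin g, M a a = 1) ∧
    ∀ a b : Fin g ⊕ Fin g,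
      (p : ℤ_[p]) ∣ (M a b - (1 : Matrix (Fin g ⊕ Fin g) (Fin g ⊕ Fin g) ℤ_[p]) a b)}

/-- The set `T₀` of pairs `(γ, υ)` with `γ ∈ Iw_{GL_g}`, `υ ∈ M_g(pℤ_p)` and
`ᵗγ J̆ υ = ᵗυ J̆ γ`. -/
def T0set (p g : ℕ) [Fact p.Prime] :
    Set (Matrix (Fin g) (Fin g) ℤ_[p] × Matrix (Fin g) (Fin g) ℤ_[p]) :=
  {x | x.1 ∈ IwGL p g ∧ (∀ i j : Fin g, (p : ℤ_[p]) ∣ x.2 i j) ∧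
    x.1ᵀ * Jb g ℤ_[p] * x.2 = x.2ᵀ * Jb g ℤ_[p] * x.1}

/-- The subset `T₀₀ ⊆ T₀` of pairs whose first component lies in `U^{opp}_{GL_g,1}`. -/
def T00set (p g : ℕ) [Fact p.Prime] :
    Set (Matrix (Fin g) (Fin g) ℤ_[p] × Matrix (Fin g) (Fin g) ℤ_[p]) :=
  {x | x ∈ T0set p g ∧ x.1 ∈ UGLopp1 p g}

/-- The map `(γ, υ) ↦ [[γ, 0], [υ, J̆ ᵗγ⁻¹ J̆]]`. -/
noncomputable def Phi (p g : ℕ) [Fact p.Prime]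
    (x : Matrix (Fin g) (Fin g) ℤ_[p] × Matrix (Fin g) (Fin g) ℤ_[p]) :
    Matrix (Fin g ⊕ Fin g) (Fin g ⊕ Fin g) ℤ_[p] :=
  Matrix.fromBlocks x.1 0 x.2 (Jb g ℤ_[p] * (x.1⁻¹)ᵀ * Jb g ℤ_[p])

/-!
A block matrix `[[γ, 0], [υ, δ]]` with `γ` invertible satisfies `ᵗM J M = ς J` exactly when
`ᵗγ J̆ υ` is symmetric and `ᵗγ J̆ δ = ς J̆`, that is, `δ = ς J̆ ᵗγ⁻¹ J̆`. Inversion preserves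
lower triangular unipotent matrices, and so does `A ↦ J̆ ᵗA J̆`, the reflection in the
anti-diagonal. Hence `δ` and `J̆ ᵗγ⁻¹ J̆` both have unit diagonal, which rules out a nontrivial
similitude factor `ς`, and `δ` is determined by `γ`.
-/

section Triangular

theorem eq_of_eq_smul_of_diag_eq_one {m R : Type*} [Monoid R] {M N : Matrix m m R} {s : R}
    (h : M = s • N) (hM : ∀ i, M i i = 1) (hN : ∀ i, N i i = 1) : M = N := by
  ext i j
  have hs : s = 1 := by simpa [hM, hN] using (congr_fun₂ h i i).symm
  rw [h, hs, one_smul]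

theorem mul_apply_self_of_isLowerTriangular {m R : Type*} [Fintype m] [LinearOrder m]
    [NonUnitalNonAssocSemiring R] {M N : Matrix m m R} (hM : M.IsLowerTriangular)
    (hN : N.IsLowerTriangular) (i : m) : (M * N) i i = M i i * N i i := by
  rw [mul_apply]
  refine Finset.sum_eq_single_of_mem i (Finset.mem_univ i) fun k _ hk => ?_
  rcases lt_or_gt_of_ne hk with hki | hik
  · rw [hN hki, mul_zero]
  · rw [hM hik, zero_mul]

theorem blockTriangular_fromBlocks_idx_iff {g : ℕ} {R : Type*} [Zero R]
    {A B C D : Matrix (Fin g) (Fin g) R} :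
    (fromBlocks A B C D).BlockTriangular (OrderDual.toDual ∘ idx) ↔
      A.IsLowerTriangular ∧ B = 0 ∧ D.IsLowerTriangular := by
  constructor
  · refine fun h => ⟨fun i j hij => h (i := .inl i) (j := .inl j) hij, ?_, fun i j hij => ?_⟩
    · ext i j
      exact h (i := .inl i) (j := .inr j) (i.isLt.trans_le (Nat.le_add_right g j))
    · exact h (i := .inr i) (j := .inr j) (Nat.add_lt_add_left hij g)
  · rintro ⟨hA, rfl, hD⟩ (i | i) (j | j) hij
    · exact hA hij
    · rfl
    · exact absurd hij (j.isLt.trans_le (Nat.le_add_right g i)).not_gt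
    · exact hD (Nat.lt_of_add_lt_add_left hij)

end Triangular

section Unipotent

variable {m n R : Type*} [CommRing R]

theorem map_quotientMk_eq_map_quotientMk_iff {I : Ideal R} {M N : Matrix m n R} :
    M.map (Ideal.Quotient.mk I) = N.map (Ideal.Quotient.mk I) ↔ ∀ i j, M i j - N i j ∈ I := by
  simp only [← Matrix.ext_iff, map_apply, Ideal.Quotient.mk_eq_mk_iff_sub_mem]

theorem map_quotientMk_eq_zero_iff {I : Ideal R} {M : Matrix m n R} :
    M.map (Ideal.Quotient.mk I) = 0 ↔ ∀ i j, M i j ∈ I := by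
  simp only [← Matrix.ext_iff, map_apply, Matrix.zero_apply, Ideal.Quotient.eq_zero_iff_mem]

theorem map_quotientMk_eq_one_iff [DecidableEq m] {I : Ideal R} {M : Matrix m m R} :
    M.map (Ideal.Quotient.mk I) = 1 ↔ ∀ i j, M i j - (1 : Matrix m m R) i j ∈ I := by
  rw [← map_quotientMk_eq_map_quotientMk_iff,
    Matrix.map_one (Ideal.Quotient.mk I) (map_zero _) (map_one _)]

/-- The lower triangular unipotent matrices congruent to the identity modulo `I`, where "lower
triangular" refers to the order in which `b` lists the row and column indices. -/
def unipotentOpp {α : Type*} [LT α] [DecidableEq m] (b : m → α) (I : Ideal R) :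
    Set (Matrix m m R) :=
  {M | M.BlockTriangular (OrderDual.toDual ∘ b) ∧ (∀ i, M i i = 1) ∧
    M.map (Ideal.Quotient.mk I) = 1}

theorem mem_unipotentOpp_id_iff [LinearOrder m] {I : Ideal R} {M : Matrix m m R} :
    M ∈ unipotentOpp id I ↔
      (∀ i j, i < j → M i j = 0) ∧ (∀ i, M i i = 1) ∧ ∀ i j, j < i → M i j ∈ I := by
  rw [unipotentOpp, Set.mem_ofPred_eq, map_quotientMk_eq_one_iff]
  refine and_congr_right fun hlower => and_congr_right fun hdiag => ⟨fun h i j hji => ?_, ?_⟩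
  · simpa only [one_apply_ne hji.ne', sub_zero] using h i j
  · intro h i j
    rcases lt_trichotomy i j with hij | rfl | hji
    · rw [hlower hij, one_apply_ne hij.ne, sub_zero]
      exact I.zero_mem
    · rw [hdiag, one_apply_eq, sub_self]
      exact I.zero_mem
    · rw [one_apply_ne hji.ne', sub_zero]
      exact h i j hji

theorem transpose_submatrix_mem_unipotentOpp [DecidableEq m] [Preorder m] [LinearOrder n]
    {I : Ideal R} {M : Matrix m m R} (hM : M ∈ unipotentOpp id I) {f : n → m} (hf : StrictAnti f) :
    Mᵀ.submatrix f f ∈ unipotentOpp id I := by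
  refine ⟨fun i j hij => hM.1 (hf hij), fun i => hM.2.1 (f i), ?_⟩
  rw [← submatrix_map, transpose_map, hM.2.2, transpose_one, submatrix_one f hf.injective]

variable [Fintype m] [LinearOrder m]

theorem det_eq_one_of_mem_unipotentOpp {I : Ideal R} {M : Matrix m m R}
    (hM : M ∈ unipotentOpp id I) : M.det = 1 := by
  simp only [det_of_isLowerTriangular M hM.1, hM.2.1, Finset.prod_const_one]

theorem inv_mem_unipotentOpp {I : Ideal R} {M : Matrix m m R} (hM : M ∈ unipotentOpp id I) :
    M⁻¹ ∈ unipotentOpp id I := by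
  have hdet : IsUnit M.det := det_eq_one_of_mem_unipotentOpp hM ▸ isUnit_one
  have := M.invertibleOfIsUnitDet hdet
  obtain ⟨hlower, hdiag, hcong⟩ := hM
  have hlower_inv : M⁻¹.IsLowerTriangular := blockTriangular_inv_of_blockTriangular hlower
  refine ⟨hlower_inv, fun i => ?_, ?_⟩
  · calc M⁻¹ i i = (M⁻¹ * M) i i := by
          rw [mul_apply_self_of_isLowerTriangular hlower_inv hlower, hdiag, mul_one]
      _ = 1 := by rw [M.nonsing_inv_mul hdet, one_apply_eq]
  · calc M⁻¹.map (Ideal.Quotient.mk I) = (M⁻¹ * M).map (Ideal.Quotient.mk I) := by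
          rw [Matrix.map_mul, hcong, Matrix.mul_one]
      _ = 1 := by
          rw [M.nonsing_inv_mul hdet, Matrix.map_one _ (map_zero _) (map_one _)]

end Unipotent

section Antidiagonal

variable (g : ℕ) (R : Type*) [CommRing R]

theorem Jb_eq_permMatrix : Jb g R = Fin.revPerm.permMatrix R := by
  ext i j
  rw [Jb, of_apply, Equiv.Perm.permMatrix, PEquiv.toMatrix_apply]
  refine if_congr ?_ rfl rfl
  rw [Equiv.toPEquiv_apply, Option.mem_some_iff, Fin.revPerm_apply, Fin.ext_iff, Fin.val_rev]
  omega

theorem transpose_Jb : (Jb g R)ᵀ = Jb g R := by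
  rw [Jb_eq_permMatrix, transpose_permMatrix, Equiv.Perm.inv_def, Fin.revPerm_symm]

variable {g R}

theorem Jb_mul_mul_Jb (M : Matrix (Fin g) (Fin g) R) :
    Jb g R * M * Jb g R = M.submatrix Fin.rev Fin.rev := by
  rw [Jb_eq_permMatrix, PEquiv.toMatrix_toPEquiv_mul, PEquiv.mul_toMatrix_toPEquiv,
    submatrix_submatrix]
  rfl

theorem Jb_mul_Jb : Jb g R * Jb g R = 1 := by
  simpa [submatrix_one _ Fin.rev_injective] using Jb_mul_mul_Jb (1 : Matrix (Fin g) (Fin g) R)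

end Antidiagonal

section Similitude

variable {g : ℕ} {R : Type*} [CommRing R] {A B C D : Matrix (Fin g) (Fin g) R}

/-- The matrix `J̆ ᵗA⁻¹ J̆`, i.e. the contragredient of `A` in the basis reversed by `J̆`. -/
noncomputable def contragredient (A : Matrix (Fin g) (Fin g) R) : Matrix (Fin g) (Fin g) R :=
  Jb g R * A⁻¹ᵀ * Jb g R

theorem contragredient_mem_unipotentOpp {I : Ideal R} (hA : A ∈ unipotentOpp id I) :
    contragredient A ∈ unipotentOpp id I := by
  rw [contragredient, Jb_mul_mul_Jb]
  exact transpose_submatrix_mem_unipotentOpp (inv_mem_unipotentOpp hA) Fin.rev_strictAnti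

theorem isUnit_det_contragredient (hA : IsUnit A.det) : IsUnit (contragredient A).det := by
  have hJ : IsUnit (Jb g R).det := isUnit_det_of_left_inverse Jb_mul_Jb
  rw [contragredient, det_mul, det_mul, det_transpose]
  exact (hJ.mul (A.isUnit_nonsing_inv_det hA)).mul hJ

theorem transpose_mul_Jb_mul_contragredient (hA : IsUnit A.det) :
    Aᵀ * Jb g R * contragredient A = Jb g R := by
  have hinv : Aᵀ * A⁻¹ᵀ = 1 := by rw [← transpose_mul, A.nonsing_inv_mul hA, transpose_one]
  calc Aᵀ * Jb g R * contragredient A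
      = Aᵀ * (Jb g R * Jb g R) * A⁻¹ᵀ * Jb g R := by simp only [contragredient, Matrix.mul_assoc]
    _ = Jb g R := by rw [Jb_mul_Jb, Matrix.mul_one, hinv, Matrix.one_mul]

theorem transpose_mul_Jb_mul_eq_smul_iff (hA : IsUnit A.det) {s : R} :
    Aᵀ * Jb g R * D = s • Jb g R ↔ D = s • contragredient A := by
  have hunit : IsUnit (Aᵀ * Jb g R) := by
    rw [isUnit_iff_isUnit_det, det_mul, det_transpose]
    exact hA.mul (isUnit_det_of_left_inverse Jb_mul_Jb)
  rw [← hunit.mul_right_inj (b := D), Matrix.mul_smul, transpose_mul_Jb_mul_contragredient hA]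

theorem transpose_fromBlocks_mul_Jmat_mul_fromBlocks :
    (fromBlocks A 0 C D)ᵀ * Jmat g R * fromBlocks A 0 C D =
      fromBlocks (Cᵀ * Jb g R * A - Aᵀ * Jb g R * C) (-(Aᵀ * Jb g R * D)) (Dᵀ * Jb g R * A) 0 := by
  simp [Jmat, fromBlocks_transpose, fromBlocks_multiply, sub_eq_add_neg]

theorem transpose_fromBlocks_mul_Jmat_mul_eq_smul_iff {s : R} :
    (fromBlocks A 0 C D)ᵀ * Jmat g R * fromBlocks A 0 C D = s • Jmat g R ↔
      Aᵀ * Jb g R * C = Cᵀ * Jb g R * A ∧ Aᵀ * Jb g R * D = s • Jb g R := by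
  -- The lower left block of the similitude equation is the transpose of the upper right one.
  have htranspose : Aᵀ * Jb g R * D = s • Jb g R → Dᵀ * Jb g R * A = s • Jb g R := fun h => by
    simpa [transpose_mul, transpose_Jb, Matrix.mul_assoc] using congr_arg transpose h
  rw [transpose_fromBlocks_mul_Jmat_mul_fromBlocks, Jmat, fromBlocks_smul, fromBlocks_inj,
    smul_neg, neg_inj, smul_zero, sub_eq_zero]
  exact ⟨fun ⟨hC, hD, _⟩ => ⟨hC.symm, hD⟩, fun ⟨hC, hD⟩ => ⟨hC.symm, hD, htranspose hD, rfl⟩⟩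

theorem isGSp_fromBlocks_iff (hA : IsUnit A.det) :
    IsGSp (fromBlocks A 0 C D) ↔
      Aᵀ * Jb g R * C = Cᵀ * Jb g R * A ∧ ∃ s : Rˣ, D = (s : R) • contragredient A := by
  simp only [IsGSp, transpose_fromBlocks_mul_Jmat_mul_eq_smul_iff,
    transpose_mul_Jb_mul_eq_smul_iff hA, exists_and_left]
  refine and_iff_right_of_imp fun ⟨_, s, hD⟩ => ?_
  rw [det_fromBlocks_zero₁₂, hD, det_smul]
  exact hA.mul ((s.isUnit.pow _).mul (isUnit_det_contragredient hA))

theorem fromBlocks_mem_unipotentOpp_iff {I : Ideal R} :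
    fromBlocks A B C D ∈ unipotentOpp idx I ↔
      A ∈ unipotentOpp id I ∧ B = 0 ∧ C.map (Ideal.Quotient.mk I) = 0 ∧
        D ∈ unipotentOpp id I := by
  have hmap : (fromBlocks A B C D).map (Ideal.Quotient.mk I) = 1 ↔
      A.map (Ideal.Quotient.mk I) = 1 ∧ B.map (Ideal.Quotient.mk I) = 0 ∧
        C.map (Ideal.Quotient.mk I) = 0 ∧ D.map (Ideal.Quotient.mk I) = 1 := by
    rw [fromBlocks_map, ← fromBlocks_one, fromBlocks_inj]
  simp only [unipotentOpp, Set.mem_ofPred_eq, blockTriangular_fromBlocks_idx_iff, hmap, Sum.forall,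
    fromBlocks_apply₁₁, fromBlocks_apply₂₂]
  constructor
  · rintro ⟨⟨hA, hB, hD⟩, ⟨hA₁, hD₁⟩, hAI, -, hCI, hDI⟩
    exact ⟨⟨hA, hA₁, hAI⟩, hB, hCI, hD, hD₁, hDI⟩
  · rintro ⟨⟨hA, hA₁, hAI⟩, rfl, hCI, hD, hD₁, hDI⟩
    exact ⟨⟨hA, rfl, hD⟩, ⟨hA₁, hD₁⟩, hAI, Matrix.map_zero _ (map_zero _), hCI, hDI⟩

/-- The unipotent lower triangular matrices in `GSp_{2g}(R)` congruent to the identity modulo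
`I`; this is `UGSpOpp1 p g` for `R = ℤ_[p]` and `I = (p)`. -/
def unipotentGSpOpp (g : ℕ) (I : Ideal R) : Set (Matrix (Fin g ⊕ Fin g) (Fin g ⊕ Fin g) R) :=
  {M | IsGSp M ∧ M ∈ unipotentOpp idx I}

/-- The pairs `(γ, υ)` with `γ` lower triangular unipotent and congruent to the identity modulo
`I`, `υ` congruent to zero modulo `I`, and `ᵗγ J̆ υ` symmetric; this is `T00set p g` for
`R = ℤ_[p]` and `I = (p)`. -/
def unipotentPairs (g : ℕ) (I : Ideal R) :
    Set (Matrix (Fin g) (Fin g) R × Matrix (Fin g) (Fin g) R) :=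
  {x | x.1 ∈ unipotentOpp id I ∧ x.2.map (Ideal.Quotient.mk I) = 0 ∧
    x.1ᵀ * Jb g R * x.2 = x.2ᵀ * Jb g R * x.1}

theorem fromBlocks_mem_unipotentGSpOpp_iff {I : Ideal R} :
    fromBlocks A B C D ∈ unipotentGSpOpp g I ↔
      (A, C) ∈ unipotentPairs g I ∧ B = 0 ∧ D = contragredient A := by
  rw [unipotentGSpOpp, Set.mem_ofPred_eq, fromBlocks_mem_unipotentOpp_iff]
  constructor
  · rintro ⟨hGSp, hA, rfl, hC, hD⟩
    have hdet : IsUnit A.det := det_eq_one_of_mem_unipotentOpp hA ▸ isUnit_one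
    obtain ⟨hAC, s, hDs⟩ := (isGSp_fromBlocks_iff hdet).1 hGSp
    exact ⟨⟨hA, hC, hAC⟩, rfl,
      eq_of_eq_smul_of_diag_eq_one hDs hD.2.1 (contragredient_mem_unipotentOpp hA).2.1⟩
  · rintro ⟨⟨hA, hC, hAC⟩, rfl, rfl⟩
    have hdet : IsUnit A.det := det_eq_one_of_mem_unipotentOpp hA ▸ isUnit_one
    exact ⟨(isGSp_fromBlocks_iff hdet).2 ⟨hAC, 1, (one_smul R _).symm⟩, hA, rfl, hC,
      contragredient_mem_unipotentOpp hA⟩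

theorem statement11_general (g : ℕ) (I : Ideal R) :
    Set.BijOn (fun x => fromBlocks x.1 0 x.2 (contragredient x.1))
      (unipotentPairs g I) (unipotentGSpOpp g I) := by
  refine ⟨fun x hx => fromBlocks_mem_unipotentGSpOpp_iff.2 ⟨hx, rfl, rfl⟩, ?_, fun M hM => ?_⟩
  · intro x _ y _ hxy
    obtain ⟨hγ, -, hυ, -⟩ := fromBlocks_inj.1 hxy
    exact Prod.ext hγ hυ
  · rw [← fromBlocks_toBlocks M, fromBlocks_mem_unipotentGSpOpp_iff] at hM
    obtain ⟨hx, hB, hD⟩ := hM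
    refine ⟨(M.toBlocks₁₁, M.toBlocks₂₁), hx, ?_⟩
    conv_rhs => rw [← fromBlocks_toBlocks M, hB, hD]

end Similitude

section PadicIntegers

variable (p g : ℕ) [Fact p.Prime]

theorem UGLopp1_eq_unipotentOpp :
    UGLopp1 p g = unipotentOpp id (Ideal.span {(p : ℤ_[p])}) := by
  ext M
  simp only [UGLopp1, Set.mem_ofPred_eq, mem_unipotentOpp_id_iff, Ideal.mem_span_singleton]

theorem UGSpOpp1_eq_unipotentGSpOpp :
    UGSpOpp1 p g = unipotentGSpOpp g (Ideal.span {(p : ℤ_[p])}) := by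
  ext M
  simp only [UGSpOpp1, unipotentGSpOpp, unipotentOpp, map_quotientMk_eq_one_iff,
    Ideal.mem_span_singleton, Set.mem_ofPred_eq]
  rfl

theorem T00set_eq_unipotentPairs :
    T00set p g = unipotentPairs g (Ideal.span {(p : ℤ_[p])}) := by
  ext ⟨γ, υ⟩
  simp only [T00set, T0set, IwGL, UGLopp1_eq_unipotentOpp, unipotentPairs,
    map_quotientMk_eq_zero_iff, Ideal.mem_span_singleton, Set.mem_ofPred_eq]
  refine ⟨fun ⟨⟨_, hυ, hγυ⟩, hγ⟩ => ⟨hγ, hυ, hγυ⟩, fun ⟨hγ, hυ, hγυ⟩ => ⟨⟨⟨?_, ?_⟩, hυ, hγυ⟩, hγ⟩⟩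
  · exact det_eq_one_of_mem_unipotentOpp hγ ▸ isUnit_one
  · simpa only [Ideal.mem_span_singleton] using (mem_unipotentOpp_id_iff.1 hγ).2.2

end PadicIntegers

theorem statement11 (p g : ℕ) [Fact p.Prime] (hg : 1 ≤ g) :
    (∀ x ∈ T00set p g, Phi p g x ∈ UGSpOpp1 p g) ∧
    (∀ x ∈ T00set p g, ∀ y ∈ T00set p g, Phi p g x = Phi p g y → x = y) ∧
    ∀ M ∈ UGSpOpp1 p g, ∃ x ∈ T00set p g, Phi p g x = M := by
  have h := statement11_general g (Ideal.span {(p : ℤ_[p])})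
  rw [← T00set_eq_unipotentPairs, ← UGSpOpp1_eq_unipotentGSpOpp] at h
  exact ⟨h.mapsTo, fun x hx y hy hxy => h.injOn hx hy hxy, h.surjOn⟩
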